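/- Let f¹, f² : ℝ⁵ → ℝ be smooth functions of (t, x, y, ζ₁, ζ₂), let δ : ℝ³ → ℝ be a smooth function satisfying δ_xx + δ_yy = 0, and let ψ : ℝ³ → ℝ be a smooth solution of ζ_t + ψ_x ζ_y − ψ_y ζ_x = ∂_x[f¹(t,x,y,ζ_x,ζ_y)] + ∂_y[f²(t,x,y,ζ_x,ζ_y)], where ζ := ψ_xx + ψ_yy and ∂_x, ∂_y differentiate the full composition. Then ψ̃(t,x,y) := ψ(t,x,y) + δ(t,x,y) is a smooth solution of the equation from the same class with arbitrary elements f̃¹(t,x,y,ζ₁,ζ₂) := f¹(t,x,y,ζ₁,ζ₂) + δ(t,x,y)·ζ₂ and f̃²(t,x,y,ζ₁,ζ₂) := f²(t,x,y,ζ₁,ζ₂) − δ(t,x,y)·ζ₁. -/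

import Mathlib

noncomputable section

abbrev V5 := ℝ × ℝ × ℝ × ℝ × ℝ

/-- Partial derivative with respect to t. -/
def dT (f : ℝ × ℝ × ℝ → ℝ) (p : ℝ × ℝ × ℝ) : ℝ := fderiv ℝ f p (1, 0, 0)
/-- Partial derivative with respect to x. -/
def dX (f : ℝ × ℝ × ℝ → ℝ) (p : ℝ × ℝ × ℝ) : ℝ := fderiv ℝ f p (0, 1, 0)
/-- Partial derivative with respect to y. -/
def dY (f : ℝ × ℝ × ℝ → ℝ) (p : ℝ × ℝ × ℝ) : ℝ := fderiv ℝ f p (0, 0, 1)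

/-- The vorticity ζ := ψ_xx + ψ_yy. -/
def vort (ψ : ℝ × ℝ × ℝ → ℝ) : ℝ × ℝ × ℝ → ℝ := fun p => dX (dX ψ) p + dY (dY ψ) p

/-- The full composition (t,x,y) ↦ f(t, x, y, ζ_x(t,x,y), ζ_y(t,x,y)). -/
def fcomp (f : V5 → ℝ) (ψ : ℝ × ℝ × ℝ → ℝ) : ℝ × ℝ × ℝ → ℝ :=
  fun p => f (p.1, p.2.1, p.2.2, dX (vort ψ) p, dY (vort ψ) p)

/-- ψ is a smooth solution of the generalized vorticity equation
ζ_t + ψ_x ζ_y − ψ_y ζ_x = ∂_x[f¹(t,x,y,ζ_x,ζ_y)] + ∂_y[f²(t,x,y,ζ_x,ζ_y)]. -/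
def IsGenVortSol (f1 f2 : V5 → ℝ) (ψ : ℝ × ℝ × ℝ → ℝ) : Prop :=
  ContDiff ℝ (⊤ : ℕ∞) ψ ∧ ∀ p : ℝ × ℝ × ℝ,
    dT (vort ψ) p + dX ψ p * dY (vort ψ) p - dY ψ p * dX (vort ψ) p
      = dX (fcomp f1 ψ) p + dY (fcomp f2 ψ) p

lemma hd_smooth (v : ℝ × ℝ × ℝ) {f : ℝ × ℝ × ℝ → ℝ} (hf : ContDiff ℝ (⊤ : ℕ∞) f) :
    ContDiff ℝ (⊤ : ℕ∞) (fun p => fderiv ℝ f p v) :=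
  (hf.fderiv_right (m := ((⊤ : ℕ∞) : WithTop ℕ∞)) (by simp)).clm_apply contDiff_const

lemma hd_diff {f : ℝ × ℝ × ℝ → ℝ} (hf : ContDiff ℝ (⊤ : ℕ∞) f) : Differentiable ℝ f :=
  hf.differentiable (by simp)

lemma hd_symm (v w : ℝ × ℝ × ℝ) {f : ℝ × ℝ × ℝ → ℝ} (hf : ContDiff ℝ (⊤ : ℕ∞) f)
    (p : ℝ × ℝ × ℝ) :
    fderiv ℝ (fun q => fderiv ℝ f q v) p w = fderiv ℝ (fun q => fderiv ℝ f q w) p v := by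
  have hd : DifferentiableAt ℝ (fderiv ℝ f) p :=
    ((hf.fderiv_right (m := ((⊤ : ℕ∞) : WithTop ℕ∞)) (by simp)).differentiable (by simp)) p
  have key : ∀ u : ℝ × ℝ × ℝ, ∀ z, fderiv ℝ (fun q => fderiv ℝ f q u) p z
      = fderiv ℝ (fderiv ℝ f) p z u := by
    intro u z
    rw [fderiv_clm_apply hd (differentiableAt_const u)]
    simp
  rw [key, key]
  have hs : IsSymmSndFDerivAt ℝ f p :=
    hf.contDiffAt.isSymmSndFDerivAt (by
      simp only [minSmoothness_of_isRCLikeNormedField]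
      exact WithTop.coe_le_coe.2 (le_top : (2 : ℕ∞) ≤ ⊤))
  exact hs w v

lemma hd_add (v : ℝ × ℝ × ℝ) {f g : ℝ × ℝ × ℝ → ℝ} (hf : ContDiff ℝ (⊤ : ℕ∞) f)
    (hg : ContDiff ℝ (⊤ : ℕ∞) g) (p : ℝ × ℝ × ℝ) :
    fderiv ℝ (fun q => f q + g q) p v = fderiv ℝ f p v + fderiv ℝ g p v := by
  rw [fderiv_fun_add (hd_diff hf p) (hd_diff hg p)]; rfl

lemma hd_sub (v : ℝ × ℝ × ℝ) {f g : ℝ × ℝ × ℝ → ℝ} (hf : ContDiff ℝ (⊤ : ℕ∞) f)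
    (hg : ContDiff ℝ (⊤ : ℕ∞) g) (p : ℝ × ℝ × ℝ) :
    fderiv ℝ (fun q => f q - g q) p v = fderiv ℝ f p v - fderiv ℝ g p v := by
  rw [fderiv_fun_sub (hd_diff hf p) (hd_diff hg p)]; rfl

lemma hd_mul (v : ℝ × ℝ × ℝ) {f g : ℝ × ℝ × ℝ → ℝ} (hf : ContDiff ℝ (⊤ : ℕ∞) f)
    (hg : ContDiff ℝ (⊤ : ℕ∞) g) (p : ℝ × ℝ × ℝ) :
    fderiv ℝ (fun q => f q * g q) p v = f p * fderiv ℝ g p v + g p * fderiv ℝ f p v := by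
  rw [fderiv_fun_mul (hd_diff hf p) (hd_diff hg p)]; rfl

lemma hd_vort {ψ δ : ℝ × ℝ × ℝ → ℝ} (hψ : ContDiff ℝ (⊤ : ℕ∞) ψ) (hδ : ContDiff ℝ (⊤ : ℕ∞) δ)
    (hharm : ∀ p : ℝ × ℝ × ℝ, dX (dX δ) p + dY (dY δ) p = 0) :
    vort (fun p => ψ p + δ p) = vort ψ := by
  have hx : dX (fun p => ψ p + δ p) = fun p => dX ψ p + dX δ p :=
    funext fun p => hd_add _ hψ hδ p
  have hy : dY (fun p => ψ p + δ p) = fun p => dY ψ p + dY δ p :=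
    funext fun p => hd_add _ hψ hδ p
  funext p
  have hxx : dX (fun p => dX ψ p + dX δ p) p = dX (dX ψ) p + dX (dX δ) p :=
    hd_add _ (hd_smooth _ hψ) (hd_smooth _ hδ) p
  have hyy : dY (fun p => dY ψ p + dY δ p) p = dY (dY ψ) p + dY (dY δ) p :=
    hd_add _ (hd_smooth _ hψ) (hd_smooth _ hδ) p
  have := hharm p
  simp only [vort]
  rw [hx, hy, hxx, hyy]
  linarith

theorem equivalence_transformation_H_delta
    (f1 f2 : V5 → ℝ) (hf1 : ContDiff ℝ (⊤ : ℕ∞) f1) (hf2 : ContDiff ℝ (⊤ : ℕ∞) f2)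
    (δ : ℝ × ℝ × ℝ → ℝ) (hδ : ContDiff ℝ (⊤ : ℕ∞) δ)
    (hharm : ∀ p : ℝ × ℝ × ℝ, dX (dX δ) p + dY (dY δ) p = 0)
    (ψ : ℝ × ℝ × ℝ → ℝ) (h : IsGenVortSol f1 f2 ψ) :
    IsGenVortSol
      (fun q => f1 q + δ (q.1, q.2.1, q.2.2.1) * q.2.2.2.2)
      (fun q => f2 q - δ (q.1, q.2.1, q.2.2.1) * q.2.2.2.1)
      (fun p => ψ p + δ p) := by
  obtain ⟨hψ, heq⟩ := h
  refine ⟨hψ.add hδ, fun p => ?_⟩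
  have hv := hd_vort hψ hδ hharm
  have hZ : ContDiff ℝ (⊤ : ℕ∞) (vort ψ) :=
    (hd_smooth _ (hd_smooth _ hψ)).add (hd_smooth _ (hd_smooth _ hψ))
  have hZx : ContDiff ℝ (⊤ : ℕ∞) (dX (vort ψ)) := hd_smooth _ hZ
  have hZy : ContDiff ℝ (⊤ : ℕ∞) (dY (vort ψ)) := hd_smooth _ hZ
  have harg : ContDiff ℝ (⊤ : ℕ∞) (fun p : ℝ × ℝ × ℝ =>
      ((p.1, p.2.1, p.2.2, dX (vort ψ) p, dY (vort ψ) p) : V5)) :=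
    contDiff_fst.prodMk ((contDiff_fst.comp contDiff_snd).prodMk
      ((contDiff_snd.comp contDiff_snd).prodMk (hZx.prodMk hZy)))
  have hc1 : ContDiff ℝ (⊤ : ℕ∞) (fcomp f1 ψ) := hf1.comp harg
  have hc2 : ContDiff ℝ (⊤ : ℕ∞) (fcomp f2 ψ) := hf2.comp harg
  have e1 : fcomp (fun q => f1 q + δ (q.1, q.2.1, q.2.2.1) * q.2.2.2.2) (fun p => ψ p + δ p)
      = fun p => fcomp f1 ψ p + δ p * dY (vort ψ) p := by
    funext p; simp only [fcomp, hv]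
  have e2 : fcomp (fun q => f2 q - δ (q.1, q.2.1, q.2.2.1) * q.2.2.2.1) (fun p => ψ p + δ p)
      = fun p => fcomp f2 ψ p - δ p * dX (vort ψ) p := by
    funext p; simp only [fcomp, hv]
  rw [e1, e2, hv]
  have d1 : dX (fun p => fcomp f1 ψ p + δ p * dY (vort ψ) p) p
      = dX (fcomp f1 ψ) p + (δ p * dX (dY (vort ψ)) p + dY (vort ψ) p * dX δ p) :=
    (hd_add _ hc1 (hδ.mul hZy) p).trans (congrArg _ (hd_mul _ hδ hZy p))
  have d2 : dY (fun p => fcomp f2 ψ p - δ p * dX (vort ψ) p) p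
      = dY (fcomp f2 ψ) p - (δ p * dY (dX (vort ψ)) p + dX (vort ψ) p * dY δ p) :=
    (hd_sub _ hc2 (hδ.mul hZx) p).trans (congrArg _ (hd_mul _ hδ hZx p))
  have hs : dX (dY (vort ψ)) p = dY (dX (vort ψ)) p := hd_symm _ _ hZ p
  have ax : dX (fun p => ψ p + δ p) p = dX ψ p + dX δ p := hd_add _ hψ hδ p
  have ay : dY (fun p => ψ p + δ p) p = dY ψ p + dY δ p := hd_add _ hψ hδ p
  rw [d1, d2, ax, ay, hs]
  linear_combination heq p
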